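/- Let B = {n ∈ ℕ : binomial(2n, n) ≡ 2 (mod 3)}, which is an infinite set, and let b_0 < b_1 < b_2 < ... be its elements in increasing order. Then for every i ∈ ℕ, b_i ≡ 1 − t_i (mod 3), where t is the Thue–Morse sequence; that is, b_i ≡ 1 (mod 3) when t_i = 0 and b_i ≡ 0 (mod 3) when t_i = 1. -/

import Mathlib

/-- The Thue–Morse sequence: `t n` is the parity of the number of ones in the
binary expansion of `n`. -/
def thueMorse (n : ℕ) : ℕ := (Nat.digits 2 n).count 1 % 2

theorem tm_lt (m : ℕ) : thueMorse m < 2 := Nat.mod_lt _ (by norm_num)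

theorem tm_even (m : ℕ) : thueMorse (2 * m) = thueMorse m := by
  rcases Nat.eq_zero_or_pos m with rfl | h
  · rfl
  · have := Nat.digits_add 2 (by norm_num) 0 m (by norm_num) (Or.inr h.ne')
    rw [zero_add] at this
    simp [thueMorse, this]

theorem tm_odd (m : ℕ) : thueMorse (2 * m + 1) = 1 - thueMorse m := by
  have := Nat.digits_add 2 (by norm_num) 1 m (by norm_num) (Or.inl (by norm_num))
  rw [add_comm] at this
  simp only [thueMorse, this, List.count_cons_self]
  omega

def gg (m : ℕ) : ℕ := Nat.ofDigits 3 (Nat.digits 2 m)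

theorem gg_even (m : ℕ) : gg (2 * m) = 3 * gg m := by
  rcases Nat.eq_zero_or_pos m with rfl | h
  · rfl
  · have := Nat.digits_add 2 (by norm_num) 0 m (by norm_num) (Or.inr h.ne')
    rw [zero_add] at this
    simp [gg, this, Nat.ofDigits_cons]

theorem gg_odd (m : ℕ) : gg (2 * m + 1) = 3 * gg m + 1 := by
  have := Nat.digits_add 2 (by norm_num) 1 m (by norm_num) (Or.inl (by norm_num))
  rw [add_comm] at this
  rw [gg, this, Nat.ofDigits_cons, gg]
  push_cast
  omega

theorem gg_mono : ∀ j i : ℕ, i < j → gg i < gg j := by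
  intro j
  induction j using Nat.strong_induction_on with
  | _ j ih =>
    intro i hij
    obtain ⟨a, ha⟩ := Nat.even_or_odd' i
    obtain ⟨b, hb⟩ := Nat.even_or_odd' j
    have h1 : a < b → gg a < gg b := fun h => ih b (by omega) a h
    have h2 : a = b → gg a = gg b := fun h => by rw [h]
    rcases ha with rfl | rfl <;> rcases hb with rfl | rfl <;>
      simp only [gg_even, gg_odd] <;> omega

theorem c_mod (m r : ℕ) (hr : r < 3) : (2 * (3 * m + r)).choose (3 * m + r) % 3
    = (2 * r % 3).choose r * (2 * m + 2 * r / 3).choose m % 3 := by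
  haveI : Fact (Nat.Prime 3) := ⟨Nat.prime_three⟩
  have h := Choose.choose_modEq_choose_mod_mul_choose_div_nat
    (p := 3) (n := 2 * (3 * m + r)) (k := 3 * m + r)
  have e1 : (2 * (3 * m + r)) % 3 = 2 * r % 3 := by omega
  have e2 : (2 * (3 * m + r)) / 3 = 2 * m + 2 * r / 3 := by omega
  have e3 : (3 * m + r) % 3 = r := by omega
  have e4 : (3 * m + r) / 3 = m := by omega
  rw [e1, e2, e3, e4] at h
  exact h

theorem c0 (m : ℕ) : (2 * (3 * m)).choose (3 * m) % 3 = (2 * m).choose m % 3 := by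
  simpa using c_mod m 0 (by norm_num)

theorem c1 (m : ℕ) : (2 * (3 * m + 1)).choose (3 * m + 1) % 3 = 2 * (2 * m).choose m % 3 := by
  simpa using c_mod m 1 (by norm_num)

theorem c2 (m : ℕ) : (2 * (3 * m + 2)).choose (3 * m + 2) % 3 = 0 := by
  simpa using c_mod m 2 (by norm_num)

theorem c_gg (m : ℕ) : (2 * gg m).choose (gg m) % 3 = 1 + thueMorse m := by
  induction m using Nat.strong_induction_on with
  | _ m ih =>
    rcases Nat.eq_zero_or_pos m with rfl | h
    · rfl
    obtain ⟨a, ha⟩ := Nat.even_or_odd' m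
    have h1 := ih a (by omega)
    have h2 := tm_lt a
    rcases ha with rfl | rfl
    · rw [gg_even, c0, tm_even, h1]
    · rw [gg_odd, c1, tm_odd]; omega

theorem c_inv (n : ℕ) : (2 * n).choose n % 3 = 0 ∨ ∃ m, gg m = n := by
  induction n using Nat.strong_induction_on with
  | _ n ih =>
    rcases Nat.eq_zero_or_pos n with rfl | h
    · exact Or.inr ⟨0, rfl⟩
    have h3 : n = 3 * (n / 3) ∨ n = 3 * (n / 3) + 1 ∨ n = 3 * (n / 3) + 2 := by omega
    have hi := ih (n / 3) (by omega)
    generalize n / 3 = k at *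
    rcases h3 with rfl | rfl | rfl
    · rw [c0]
      rcases hi with hi | ⟨m, rfl⟩
      · exact Or.inl hi
      · exact Or.inr ⟨2 * m, gg_even m⟩
    · rw [c1]
      rcases hi with hi | ⟨m, rfl⟩
      · left; omega
      · exact Or.inr ⟨2 * m + 1, gg_odd m⟩
    · exact Or.inl (c2 k)

def ff (i : ℕ) : ℕ := 3 * gg i + (1 - thueMorse i)

theorem ff_mono : StrictMono ff := by
  intro i j h
  have := gg_mono j i h
  unfold ff
  omega

theorem ff_range : Set.range ff = {n : ℕ | (2 * n).choose n % 3 = 2} := by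
  ext n
  simp only [Set.mem_range, Set.mem_setOf_eq]
  constructor
  · rintro ⟨i, rfl⟩
    have h := c_gg i
    unfold ff
    have h2 := tm_lt i
    have h3 : thueMorse i = 0 ∨ thueMorse i = 1 := by omega
    rcases h3 with h3 | h3
    · rw [h3, Nat.sub_zero, c1]; omega
    · rw [h3, Nat.sub_self, add_zero, c0]; omega
  · intro hn
    rcases c_inv n with h | ⟨m, rfl⟩
    · omega
    have h := c_gg m
    obtain ⟨a, ha⟩ := Nat.even_or_odd' m
    have h2 := tm_lt a
    refine ⟨a, ?_⟩
    unfold ff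
    rcases ha with rfl | rfl
    · rw [tm_even] at h; rw [gg_even]; omega
    · rw [tm_odd] at h; rw [gg_odd]; omega

/-- The set `B` of `n` with `C(2n, n) ≡ 2 (mod 3)` is infinite, and its `i`-th
element `b_i` (in increasing order) satisfies `b_i ≡ 1 - t_i (mod 3)` where `t` is
the Thue–Morse sequence. -/
theorem nth_centralBinom_two_mod_three :
    {n : ℕ | (2 * n).choose n % 3 = 2}.Infinite ∧
    ∀ i : ℕ, Nat.nth (fun n => (2 * n).choose n % 3 = 2) i ≡ 1 - thueMorse i [MOD 3] := by
  have hinf : {n : ℕ | (2 * n).choose n % 3 = 2}.Infinite := by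
    rw [← ff_range]
    exact Set.infinite_range_of_injective ff_mono.injective
  refine ⟨hinf, fun i => ?_⟩
  have h : Nat.nth (fun n => (2 * n).choose n % 3 = 2) = ff :=
    ((Nat.nth_strictMono hinf).range_inj ff_mono).1
      ((Nat.range_nth_of_infinite hinf).trans ff_range.symm)
  rw [h]
  unfold ff Nat.ModEq
  omega
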